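/- arXiv:1308.1212 — 3 statements merged into one kernel-verified Lean document; each statement's English description precedes it below -/
import Mathlib

section
/- Fix integers m ≥ 2 and d ≥ 0 and a real α ∈ (0, 1). For each n, let r_n = ⌈αn⌉, let π be a uniformly random permutation of {1, …, n}, let p(i) = |{j ≤ i : π(j) ≥ π(i)}|, and let S_n = |{i : r_n < i ≤ n, p(i) ≤ m−1}|. Then lim_{n→∞} Pr(S_n = d) = α^{m−1} · ((m−1)·ln(1/α))^d / d!. -/
open scoped Classical

open Filter Topology Finset

theorem Multiset.esymm_zero {R : Type*} [CommSemiring R] (M : Multiset R) : M.esymm 0 = 1 := by simp [Multiset.esymm]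

theorem Multiset.esymm_cons_succ {R : Type*} [CommSemiring R] (a : R) (M : Multiset R) (d : ℕ) :
    (a ::ₘ M).esymm (d + 1) = M.esymm (d + 1) + a * M.esymm d := by
  simp [Multiset.esymm, Multiset.powersetCard_cons, Multiset.sum_map_mul_left]

theorem Multiset.mul_esymm_eq_sum {R : Type*} [CommRing R] (M : Multiset R) (d : ℕ) :
    (d : R) * M.esymm d = (-1) ^ (d + 1) *
      ∑ a ∈ HasAntidiagonal.antidiagonal d with a.1 < d, (-1) ^ a.1 * M.esymm a.1 * (M.map (· ^ a.2)).sum := by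
  have h := congrArg (MvPolynomial.aeval (fun x : M => x.1)) (MvPolynomial.mul_esymm_eq_sum M R d)
  have hp (j : ℕ) : ∑ x : M, x.1 ^ j = (M.map (· ^ j)).sum := by
    conv_rhs => rw [← M.map_univ_coe, Multiset.map_map]
    rfl
  simpa only [map_mul, map_natCast, map_sum, map_pow, map_neg, map_one, MvPolynomial.aeval_X,
    MvPolynomial.aeval_esymm_eq_multiset_esymm, Multiset.map_univ_coe, MvPolynomial.psum, hp] using h

theorem tendsto_esymm {ι : Type*} {l : Filter ι} (M : ι → Multiset ℝ) (L : ℝ)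
    (h₁ : Tendsto (fun n => (M n).sum) l (𝓝 L))
    (h₂ : ∀ j, 2 ≤ j → Tendsto (fun n => ((M n).map (· ^ j)).sum) l (𝓝 0)) (d : ℕ) :
    Tendsto (fun n => (M n).esymm d) l (𝓝 (L ^ d / d.factorial)) := by
  induction d using Nat.strong_induction_on with
  | _ d ih =>
  rcases d with _ | d
  · simpa [Multiset.esymm_zero] using tendsto_const_nhds
  have hd : ((d + 1 : ℕ) : ℝ) ≠ 0 := by positivity
  have hsum : Tendsto (fun n => ∑ a ∈ HasAntidiagonal.antidiagonal (d + 1) with a.1 < d + 1,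
      (-1) ^ a.1 * (M n).esymm a.1 * ((M n).map (· ^ a.2)).sum) l
      (𝓝 (∑ a ∈ HasAntidiagonal.antidiagonal (d + 1) with a.1 < d + 1,
        (-1) ^ a.1 * (L ^ a.1 / a.1.factorial) * if a = (d, 1) then L else 0)) := by
    refine tendsto_finsetSum _ fun a ha => ?_
    simp only [mem_filter, HasAntidiagonal.mem_antidiagonal] at ha
    refine ((ih a.1 ha.2).const_mul _).mul ?_
    split_ifs with h
    · simpa [h] using h₁
    · refine h₂ _ ?_
      by_contra hlt
      exact h (Prod.ext (by simp; omega) (by simp; omega))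
  have hlim := (hsum.const_mul ((-1 : ℝ) ^ (d + 1 + 1))).const_mul ((d + 1 : ℕ) : ℝ)⁻¹
  convert hlim using 1
  · ext n
    rw [← Multiset.mul_esymm_eq_sum, inv_mul_cancel_left₀ hd]
  · congr 1
    simp only [mul_ite, mul_zero, Finset.sum_ite_eq', mem_filter, HasAntidiagonal.mem_antidiagonal]
    rw [if_pos (by simp), Nat.factorial_succ]
    have : (-1 : ℝ) ^ (d + 1 + 1) * (-1) ^ d = 1 := by
      rw [← pow_add]; exact Even.neg_one_pow ⟨d + 1, by ring⟩
    have hf : (d.factorial : ℝ) ≠ 0 := by positivity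
    push_cast at hd ⊢
    field_simp
    linear_combination (-L ^ (d + 1)) * this

/-- Permutations of `Fin (n + 1)` correspond to a last value together with the relative order of
the earlier values. -/
noncomputable def permLastEquiv (n : ℕ) : Fin (n + 1) × Equiv.Perm (Fin n) ≃ Equiv.Perm (Fin (n + 1)) :=
  Equiv.ofBijective
    (fun p => (finSuccEquiv' (Fin.last n)).trans
      ((Equiv.optionCongr p.2).trans (finSuccEquiv' p.1).symm)) <| by
    rw [Fintype.bijective_iff_injective_and_card]
    refine ⟨?_, by simp [Fintype.card_perm, Nat.factorial_succ]⟩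
    rintro ⟨v, σ⟩ ⟨w, τ⟩ h
    have hv : v = w := by simpa using Equiv.congr_fun h (Fin.last n)
    subst hv
    refine Prod.ext rfl (Equiv.ext fun i => ?_)
    simpa [← Fin.succAbove_last] using Equiv.congr_fun h i.castSucc

@[simp] theorem permLastEquiv_last {n : ℕ} (v : Fin (n + 1)) (σ : Equiv.Perm (Fin n)) :
    permLastEquiv n (v, σ) (Fin.last n) = v := by
  simp [permLastEquiv]

@[simp] theorem permLastEquiv_castSucc {n : ℕ} (v : Fin (n + 1)) (σ : Equiv.Perm (Fin n))
    (i : Fin n) : permLastEquiv n (v, σ) i.castSucc = v.succAbove (σ i) := by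
  simp [permLastEquiv, ← Fin.succAbove_last]

/-- The number of indices `j ≤ i` whose value is at least that of `i`. -/
def relRank {n : ℕ} (π : Equiv.Perm (Fin n)) (i : Fin n) : ℕ :=
  (univ.filter (fun j : Fin n => j ≤ i ∧ π i ≤ π j)).card

theorem relRank_permLastEquiv_castSucc {n : ℕ} (v : Fin (n + 1)) (σ : Equiv.Perm (Fin n))
    (i : Fin n) : relRank (permLastEquiv n (v, σ)) i.castSucc = relRank σ i := by
  simp only [relRank, Finset.card_filter, Fin.sum_univ_castSucc]
  simp [-sum_boole]

theorem relRank_permLastEquiv_last {n : ℕ} (v : Fin (n + 1)) (σ : Equiv.Perm (Fin n)) :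
    relRank (permLastEquiv n (v, σ)) (Fin.last n) = n + 1 - v := by
  have := Fintype.card_congr ((permLastEquiv n (v, σ)).subtypeEquiv
    (p := fun j => v ≤ permLastEquiv n (v, σ) j) (q := fun j => v ≤ j) fun _ => Iff.rfl)
  rw [Fintype.card_subtype, Fintype.card_subtype] at this
  simp only [relRank, permLastEquiv_last, Fin.le_last, true_and]
  rw [this]
  simp [Finset.filter_le_eq_Ici]

/-- The number of indices at least `r` of relative rank at most `k`. -/
def lateCount {n : ℕ} (r k : ℕ) (π : Equiv.Perm (Fin n)) : ℕ :=
  (univ.filter (fun i : Fin n => r ≤ (i : ℕ) ∧ relRank π i ≤ k)).card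

theorem lateCount_permLastEquiv {n r : ℕ} (k : ℕ) (hr : r ≤ n) (v : Fin (n + 1))
    (σ : Equiv.Perm (Fin n)) : lateCount r k (permLastEquiv n (v, σ)) =
      lateCount r k σ + if n + 1 - v ≤ k then 1 else 0 := by
  simp only [lateCount, Finset.card_filter, Fin.sum_univ_castSucc, relRank_permLastEquiv_castSucc,
    relRank_permLastEquiv_last]
  simp [-sum_boole, hr]

/-- The number of permutations of `Fin n` with exactly `d` late indices of small relative rank. -/
def permCount (n r k d : ℕ) : ℕ :=
  (univ.filter (fun π : Equiv.Perm (Fin n) => lateCount r k π = d)).card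

theorem card_filter_sub_le {n k : ℕ} (hk : k ≤ n) :
    (univ.filter (fun v : Fin (n + 1) => n + 1 - (v : ℕ) ≤ k)).card = k := by
  have h : (univ.filter (fun v : Fin (n + 1) => n + 1 - (v : ℕ) ≤ k)).card =
      (univ.filter (fun v : Fin (n + 1) => (v : ℕ) < k)).card := by
    refine Finset.card_equiv Fin.revPerm fun v => ?_
    simp [Fin.val_rev]
    omega
  rw [h, Fin.card_filter_val_lt]
  omega

theorem permCount_succ_eq {n r k : ℕ} (hr : r ≤ n) (hk : k ≤ n) (d : ℕ) :
    permCount (n + 1) r k d = (n + 1 - k) * permCount n r k d +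
      k * (univ.filter (fun π : Equiv.Perm (Fin n) => lateCount r k π + 1 = d)).card := by
  have hc : (univ.filter (fun v : Fin (n + 1) => ¬ n + 1 - (v : ℕ) ≤ k)).card = n + 1 - k := by
    have := Finset.card_filter_add_card_filter_not (s := (univ : Finset (Fin (n + 1))))
      (fun v => n + 1 - (v : ℕ) ≤ k)
    rw [card_filter_sub_le hk, Finset.card_univ, Fintype.card_fin] at this
    omega
  have hpt (v : Fin (n + 1)) (c : ℕ) :
      (if c + (if n + 1 - (v : ℕ) ≤ k then 1 else 0) = d then 1 else 0) =
      (if ¬ n + 1 - (v : ℕ) ≤ k then 1 else 0) * (if c = d then 1 else 0) +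
      (if n + 1 - (v : ℕ) ≤ k then 1 else 0) * (if c + 1 = d then 1 else 0) := by
    split_ifs <;> simp_all
  unfold permCount
  rw [Finset.card_filter, ← (permLastEquiv n).sum_comp, Fintype.sum_prod_type]
  simp only [lateCount_permLastEquiv k hr, hpt, Finset.sum_add_distrib, ← Finset.mul_sum,
    ← Finset.sum_mul, ← Finset.card_filter, hc, card_filter_sub_le hk]

theorem permCount_self (r k d : ℕ) : permCount r r k d = if d = 0 then r.factorial else 0 := by
  have h (π : Equiv.Perm (Fin r)) : lateCount r k π = 0 := by
    simp only [lateCount, Finset.card_eq_zero, Finset.filter_eq_empty_iff]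
    rintro i - ⟨hi, -⟩
    omega
  simp only [permCount, h]
  split_ifs with hd
  · simp [hd, Fintype.card_perm]
  · simp [Ne.symm hd]

/-- The odds `k / (i + 1 - k)` that index `i` has relative rank at most `k`, for `i` in
`[r, n)`. -/
noncomputable def lateOdds (r n k : ℕ) : Multiset ℝ :=
  (Finset.Ico r n).val.map fun i => (k : ℝ) / ((i + 1 - k : ℕ) : ℝ)

theorem lateOdds_succ {r n : ℕ} (k : ℕ) (h : r ≤ n) :
    lateOdds r (n + 1) k = ((k : ℝ) / ((n + 1 - k : ℕ) : ℝ)) ::ₘ lateOdds r n k := by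
  rw [lateOdds, ← Finset.insert_Ico_right_eq_Ico_add_one h,
    Finset.insert_val_of_notMem (by simp), Multiset.map_cons, lateOdds]

theorem permCount_mul_descFactorial {r k : ℕ} (hk : k ≤ r) {n : ℕ} (hn : r ≤ n) (d : ℕ) :
    (permCount n r k d : ℝ) * n.descFactorial k =
      n.factorial * r.descFactorial k * (lateOdds r n k).esymm d := by
  induction n, hn using Nat.le_induction generalizing d with
  | base =>
    rcases d with _ | d
    · simp [permCount_self, lateOdds, Multiset.esymm_zero]
    · simp [permCount_self, lateOdds, Multiset.esymm, Multiset.powersetCard_zero_right]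
  | succ n hn ih =>
    have hpos : ((n + 1 - k : ℕ) : ℝ) ≠ 0 := by
      have : n + 1 - k ≠ 0 := by omega
      exact_mod_cast this
    have hD : ((n + 1 - k : ℕ) : ℝ) * (n + 1).descFactorial k =
        ((n + 1 : ℕ) : ℝ) * n.descFactorial k := by
      exact_mod_cast Nat.succ_descFactorial n k
    have hD' : ((n + 1).descFactorial k : ℝ) =
        ((n + 1 : ℕ) : ℝ) * n.descFactorial k / ((n + 1 - k : ℕ) : ℝ) := by
      rw [← hD]; field_simp
    rw [permCount_succ_eq hn (hk.trans hn), lateOdds_succ k hn, Nat.factorial_succ, Nat.cast_add,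
      Nat.cast_mul, Nat.cast_mul, Nat.cast_mul, hD']
    rcases d with _ | d
    · have := ih 0
      simp only [Multiset.esymm_zero, Nat.add_eq_zero_iff, one_ne_zero, and_false,
        Finset.filter_false, Finset.card_empty] at this ⊢
      field_simp
      push_cast at *
      linear_combination ((n + 1 - k : ℕ) : ℝ) * this
    · have h₀ := ih d
      have h₁ := ih (d + 1)
      simp only [Nat.add_right_cancel_iff, Multiset.esymm_cons_succ]
      change (_ * _ + _ * (permCount n r k d : ℝ)) * _ = _
      field_simp
      linear_combination ((n + 1 - k : ℕ) : ℝ) * h₁ + k * h₀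

section Limits

variable {α : ℝ}

theorem tendsto_ceil_mul (hα0 : 0 < α) : Tendsto (fun n : ℕ => ⌈α * (n : ℝ)⌉₊) atTop atTop :=
  tendsto_nat_ceil_atTop.comp (tendsto_natCast_atTop_atTop.const_mul_atTop hα0)

theorem tendsto_ceil_sub_div_sub (hα0 : 0 < α) (k : ℕ) :
    Tendsto (fun n : ℕ => ((⌈α * (n : ℝ)⌉₊ - k : ℕ) : ℝ) / ((n - k : ℕ) : ℝ)) atTop (𝓝 α) := by
  have h := (tendsto_nat_ceil_mul_div_atTop hα0.le).comp (tendsto_natCast_atTop_atTop (R := ℝ))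
  have hk : Tendsto (fun n : ℕ => (k : ℝ) / (n : ℝ)) atTop (𝓝 0) :=
    tendsto_const_div_atTop_nhds_zero_nat _
  have hq := (h.sub hk).div (tendsto_const_nhds (x := (1 : ℝ)) |>.sub hk) (by norm_num)
  simp only [sub_zero, div_one] at hq
  refine hq.congr' ?_
  filter_upwards [eventually_gt_atTop k, (tendsto_ceil_mul hα0).eventually_ge_atTop k]
    with n hn hr
  have hn0 : (n : ℝ) ≠ 0 := by
    have : n ≠ 0 := by omega
    exact_mod_cast this
  have hnk : (n : ℝ) - k ≠ 0 := sub_ne_zero.2 (by exact_mod_cast hn.ne')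
  rw [Nat.cast_sub hr, Nat.cast_sub hn.le]
  simp only [Pi.div_apply, Function.comp_apply]
  field_simp

theorem ceil_mul_le (hα1 : α < 1) (n : ℕ) : ⌈α * (n : ℝ)⌉₊ ≤ n :=
  Nat.ceil_le.2 (mul_le_of_le_one_left n.cast_nonneg hα1.le)

theorem tendsto_descFactorial_div (hα0 : 0 < α) (k : ℕ) :
    Tendsto (fun n : ℕ => ((⌈α * (n : ℝ)⌉₊.descFactorial k : ℕ) : ℝ) / (n.descFactorial k : ℕ))
      atTop (𝓝 (α ^ k)) := by
  induction k with
  | zero => simp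
  | succ k ih =>
    rw [pow_succ']
    refine ((tendsto_ceil_sub_div_sub hα0 k).mul ih).congr fun n => ?_
    rw [Nat.descFactorial_succ, Nat.descFactorial_succ, Nat.cast_mul, Nat.cast_mul,
      mul_div_mul_comm]

theorem sum_lateOdds {r n k : ℕ} (hk : k ≤ r) (hn : r ≤ n) :
    (lateOdds r n k).sum = k * ((harmonic (n - k) : ℝ) - harmonic (r - k)) := by
  induction n, hn using Nat.le_induction with
  | base => simp [lateOdds]
  | succ n hn ih =>
    rw [lateOdds_succ k hn, Multiset.sum_cons, ih, Nat.succ_sub (hk.trans hn), harmonic_succ]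
    push_cast
    ring

theorem tendsto_sum_lateOdds (hα0 : 0 < α) (hα1 : α < 1) (k : ℕ) :
    Tendsto (fun n : ℕ => (lateOdds ⌈α * (n : ℝ)⌉₊ n k).sum) atTop
      (𝓝 (k * Real.log (1 / α))) := by
  have hrk : Tendsto (fun n : ℕ => ⌈α * (n : ℝ)⌉₊ - k) atTop atTop :=
    (tendsto_sub_atTop_nat k).comp (tendsto_ceil_mul hα0)
  have hH := Real.tendsto_harmonic_sub_log
  have hlog := (tendsto_ceil_sub_div_sub hα0 k).log hα0.ne'
  have h := (((hH.comp (tendsto_sub_atTop_nat k)).sub (hH.comp hrk)).sub hlog).const_mul (k : ℝ)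
  rw [sub_self, zero_sub] at h
  rw [one_div, Real.log_inv]
  refine h.congr' ?_
  filter_upwards [eventually_gt_atTop k, (tendsto_ceil_mul hα0).eventually_gt_atTop k]
    with n hn hr
  have h₁ : ((n - k : ℕ) : ℝ) ≠ 0 := by exact_mod_cast (Nat.sub_pos_of_lt hn).ne'
  have h₂ : ((⌈α * (n : ℝ)⌉₊ - k : ℕ) : ℝ) ≠ 0 := by exact_mod_cast (Nat.sub_pos_of_lt hr).ne'
  rw [sum_lateOdds hr.le (ceil_mul_le hα1 n), Real.log_div h₂ h₁]
  simp only [Function.comp_apply]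
  ring

theorem sum_pow_lateOdds_le {r n k : ℕ} (hk : k ≤ r) (j : ℕ) :
    ((lateOdds r n k).map (· ^ (j + 1))).sum ≤
      ((k : ℝ) / ((r + 1 - k : ℕ) : ℝ)) ^ j * (lateOdds r n k).sum := by
  rw [lateOdds, Multiset.map_map]
  change ∑ i ∈ Finset.Ico r n, ((k : ℝ) / ((i + 1 - k : ℕ) : ℝ)) ^ (j + 1) ≤
    _ * ∑ i ∈ Finset.Ico r n, (k : ℝ) / ((i + 1 - k : ℕ) : ℝ)
  rw [Finset.mul_sum]
  refine Finset.sum_le_sum fun i hi => ?_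
  rw [Finset.mem_Ico] at hi
  have hpos : (0 : ℝ) < ((r + 1 - k : ℕ) : ℝ) := by exact_mod_cast (by omega)
  have hle : ((r + 1 - k : ℕ) : ℝ) ≤ ((i + 1 - k : ℕ) : ℝ) := by exact_mod_cast (by omega)
  rw [pow_succ]
  gcongr

theorem tendsto_sum_pow_lateOdds (hα0 : 0 < α) (hα1 : α < 1) (k j : ℕ) (hj : 2 ≤ j) :
    Tendsto (fun n : ℕ => ((lateOdds ⌈α * (n : ℝ)⌉₊ n k).map (· ^ j)).sum) atTop (𝓝 0) := by
  obtain ⟨j, rfl⟩ : ∃ i, j = i + 1 := ⟨j - 1, by omega⟩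
  have hr : Tendsto (fun n : ℕ => ((⌈α * (n : ℝ)⌉₊ + 1 - k : ℕ) : ℝ)) atTop atTop :=
    tendsto_natCast_atTop_atTop.comp ((tendsto_sub_atTop_nat k).comp
      ((tendsto_add_atTop_nat 1).comp (tendsto_ceil_mul hα0)))
  have hz := ((hr.const_div_atTop (k : ℝ)).pow j).mul (tendsto_sum_lateOdds hα0 hα1 k)
  rw [zero_pow (by omega), zero_mul] at hz
  refine squeeze_zero' (Eventually.of_forall fun n => ?_) ?_ hz
  · refine Multiset.sum_nonneg fun x hx => ?_
    simp only [lateOdds, Multiset.map_map, Multiset.mem_map] at hx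
    obtain ⟨i, -, rfl⟩ := hx
    simp only [Function.comp_apply]
    positivity
  · filter_upwards [(tendsto_ceil_mul hα0).eventually_ge_atTop k] with n hn
    exact sum_pow_lateOdds_le hn j

end Limits

/-- fix `m ≥ 2`, `d ≥ 0` and `α ∈ (0,1)`; let `r_n = ⌈αn⌉`. For a
uniformly random permutation `π` of `Fin n` (position `i` carries value `π i`; 0-indexed,
so the paper's 1-indexed position `k` is index `k-1`), with relative rank
`p(i) = |{j ≤ i : π j ≥ π i}|`, let `S_n` be the number of positions `i` with
`r_n < i ≤ n` (1-indexed) and `p(i) ≤ m-1`. Then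
`Pr(S_n = d) → α^{m-1} · ((m-1)·ln(1/α))^d / d!` as `n → ∞`. -/
theorem stmt16 (m d : ℕ) (hm : 2 ≤ m) (α : ℝ) (hα0 : 0 < α) (hα1 : α < 1) :
    Filter.Tendsto (fun n : ℕ =>
        ((Finset.univ.filter (fun π : Equiv.Perm (Fin n) =>
            (Finset.univ.filter (fun i : Fin n =>
              ⌈α * (n : ℝ)⌉₊ ≤ (i : ℕ) ∧
              (Finset.univ.filter (fun j : Fin n => j ≤ i ∧ π i ≤ π j)).card ≤ m - 1)).card
            = d)).card : ℝ) / (Nat.factorial n : ℝ))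
      Filter.atTop
      (nhds (α ^ (m - 1) * (((m : ℝ) - 1) * Real.log (1 / α)) ^ d / (Nat.factorial d : ℝ))) := by
  have hm' : ((m - 1 : ℕ) : ℝ) = (m : ℝ) - 1 := by
    rw [Nat.cast_sub (by omega), Nat.cast_one]
  rw [← hm', mul_div_assoc]
  refine ((tendsto_descFactorial_div hα0 (m - 1)).mul
    (tendsto_esymm _ _ (tendsto_sum_lateOdds hα0 hα1 (m - 1))
      (fun j => tendsto_sum_pow_lateOdds hα0 hα1 (m - 1) j) d)).congr' ?_
  filter_upwards [eventually_ge_atTop (m - 1),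
    (tendsto_ceil_mul hα0).eventually_ge_atTop (m - 1)] with n hn hr
  have h := permCount_mul_descFactorial hr (ceil_mul_le hα1 n) d
  have hf : (n.factorial : ℝ) ≠ 0 := by positivity
  have hD : (n.descFactorial (m - 1) : ℝ) ≠ 0 := by
    exact_mod_cast (Nat.descFactorial_pos.2 hn).ne'
  change _ = (permCount n ⌈α * (n : ℝ)⌉₊ (m - 1) d : ℝ) / _
  rw [eq_div_iff hf, div_mul_eq_mul_div, div_mul_eq_mul_div, div_eq_iff hD, h]
  ring
end

section
/- Let n ≥ 1, let v_1, …, v_n ≥ 0 be weights (identical-basestations case with m = 2 basestations), and let f : Fin n → Fin 2 be an allocation such that the set M_2 = {i : f(i) = 2} has size d ≥ 1 and contains some user of maximum weight (i.e., some i_0 ∈ M_2 with v_{i_0} = max_i v_i). Then d · TS(f, v) ≥ max_g TS(g, v), i.e., such an allocation is within a factor d of the optimal offline time-sharing utility. -/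
/-- Time-sharing utility of an allocation `f` of `n` users to `m` basestations with
weights `w i j`: each basestation's contribution is the sum of weights of its users
divided by its degree (empty basestations contribute `0`, via `0/0 = 0`). -/
noncomputable def TS {n m : ℕ} (f : Fin n → Fin m) (w : Fin n → Fin m → ℝ) : ℝ :=
  ∑ j : Fin m, (∑ i ∈ Finset.univ.filter (fun i => f i = j), w i j) /
    ((Finset.univ.filter (fun i => f i = j)).card : ℝ)

/-- The average over a set containing a maximizer plus the average over the complement is at
most the value obtained by isolating the maximizer. -/
theorem average_add_average_compl_le {ι : Type*} [Fintype ι] [DecidableEq ι] (v : ι → ℝ) (i₀ : ι)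
    (hnn : ∀ i, 0 ≤ v i) (hmax : ∀ i, v i ≤ v i₀) (s : Finset ι) (hs : i₀ ∈ s) :
    (∑ i ∈ s, v i) / (s.card : ℝ) + (∑ i ∈ sᶜ, v i) / (sᶜ.card : ℝ) ≤
      v i₀ + (∑ i, v i - v i₀) / ((Fintype.card ι : ℝ) - 1) := by
  have hcard : (s.card : ℝ) + sᶜ.card = Fintype.card ι := by
    exact_mod_cast s.card_add_card_compl
  have hsum := Finset.sum_add_sum_compl s v
  have ha : (1 : ℝ) ≤ s.card := by exact_mod_cast Finset.card_pos.mpr ⟨i₀, hs⟩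
  have hA : ∑ i ∈ s, v i - v i₀ ≤ (s.card - 1) * v i₀ := by
    have := Finset.sum_le_card_nsmul s v (v i₀) fun i _ => hmax i
    rw [nsmul_eq_mul] at this
    linarith
  have hB : ∑ i ∈ sᶜ, v i ≤ sᶜ.card * v i₀ := by
    simpa using Finset.sum_le_card_nsmul sᶜ v (v i₀) fun i _ => hmax i
  rw [← hcard, ← hsum]
  rcases Finset.eq_empty_or_nonempty sᶜ with he | hne
  · simp only [he, Finset.sum_empty, Finset.card_empty, Nat.cast_zero, zero_div, add_zero]
    have hT : 0 ≤ ∑ i ∈ s, v i - v i₀ :=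
      sub_nonneg.mpr (Finset.single_le_sum (fun i _ => hnn i) hs)
    have havg : (∑ i ∈ s, v i) / (s.card : ℝ) ≤ v i₀ := by
      rw [div_le_iff₀ (by linarith)]
      linarith
    have := div_nonneg hT (sub_nonneg.mpr ha)
    linarith
  · have hb : (1 : ℝ) ≤ sᶜ.card := by exact_mod_cast hne.card_pos
    generalize (s.card : ℝ) = a at *
    generalize (sᶜ.card : ℝ) = b at *
    generalize ∑ i ∈ s, v i = A at *
    generalize ∑ i ∈ sᶜ, v i = B at *
    have hp : 0 < a + b - 1 := by linarith
    have h₁ : 0 ≤ 1 / a - 1 / (a + b - 1) :=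
      sub_nonneg.mpr (one_div_le_one_div_of_le (by linarith) (by linarith))
    have h₂ : 0 ≤ 1 / b - 1 / (a + b - 1) :=
      sub_nonneg.mpr (one_div_le_one_div_of_le (by linarith) (by linarith))
    have key := add_le_add (mul_le_mul_of_nonneg_right hA h₁) (mul_le_mul_of_nonneg_right hB h₂)
    have e : v i₀ + (A + B - v i₀) / (a + b - 1) - (A / a + B / b) =
        ((a - 1) * v i₀ * (1 / a - 1 / (a + b - 1)) + b * v i₀ * (1 / b - 1 / (a + b - 1))) -
        ((A - v i₀) * (1 / a - 1 / (a + b - 1)) + B * (1 / b - 1 / (a + b - 1))) := by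
      field_simp
      ring
    linarith

/-- Isolating a user `i₀` gives at most `#s` times the sum of the averages over `s` and over its
complement, whenever `i₀ ∈ s`. -/
theorem isolated_utility_le_card_mul {ι : Type*} [Fintype ι] [DecidableEq ι] (v : ι → ℝ)
    (hnn : ∀ i, 0 ≤ v i) (i₀ : ι) (s : Finset ι) (hs : i₀ ∈ s) :
    v i₀ + (∑ i, v i - v i₀) / ((Fintype.card ι : ℝ) - 1) ≤
      s.card * ((∑ i ∈ s, v i) / (s.card : ℝ) + (∑ i ∈ sᶜ, v i) / (sᶜ.card : ℝ)) := by
  have hcard : (s.card : ℝ) + sᶜ.card = Fintype.card ι := by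
    exact_mod_cast s.card_add_card_compl
  have hsum := Finset.sum_add_sum_compl s v
  have ha : (1 : ℝ) ≤ s.card := by exact_mod_cast Finset.card_pos.mpr ⟨i₀, hs⟩
  have ha0 : (s.card : ℝ) ≠ 0 := by linarith
  have hU : 0 ≤ ∑ i ∈ s, v i - v i₀ :=
    sub_nonneg.mpr (Finset.single_le_sum (fun i _ => hnn i) hs)
  have hB : 0 ≤ ∑ i ∈ sᶜ, v i := Finset.sum_nonneg fun i _ => hnn i
  have hrest : (∑ i ∈ sᶜ, v i) / ((Fintype.card ι : ℝ) - 1) ≤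
      s.card * ((∑ i ∈ sᶜ, v i) / (sᶜ.card : ℝ)) := by
    rcases Finset.eq_empty_or_nonempty sᶜ with he | hne
    · simp [he]
    · have hb : (0 : ℝ) < sᶜ.card := by exact_mod_cast hne.card_pos
      calc _ ≤ (∑ i ∈ sᶜ, v i) / (sᶜ.card : ℝ) :=
            div_le_div_of_nonneg_left hB hb (by linarith)
        _ ≤ _ := le_mul_of_one_le_left (by positivity) ha
  have hown : (∑ i ∈ s, v i - v i₀) / ((Fintype.card ι : ℝ) - 1) ≤ ∑ i ∈ s, v i - v i₀ := by
    rcases Nat.lt_or_ge (Fintype.card ι) 2 with h | h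
    · have h1 : Fintype.card ι = 1 := by
        have := Fintype.card_pos_iff.mpr ⟨i₀⟩
        omega
      simpa [h1] using hU
    · have h2 : (2 : ℝ) ≤ Fintype.card ι := by exact_mod_cast h
      exact div_le_self hU (by linarith)
  rw [mul_add, mul_div_cancel₀ _ ha0, ← hsum, add_sub_right_comm, add_div]
  linarith

/-- With two identical basestations, the utility is the sum of the averages over a
basestation's users and over the remaining users. -/
theorem TS_two_eq {n : ℕ} (g : Fin n → Fin 2) (v : Fin n → ℝ) (j : Fin 2) :
    TS g (fun i _ => v i) =
      (∑ i ∈ Finset.univ.filter (fun i => g i = j), v i) /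
          ((Finset.univ.filter (fun i => g i = j)).card : ℝ) +
        (∑ i ∈ (Finset.univ.filter (fun i => g i = j))ᶜ, v i) /
          ((Finset.univ.filter (fun i => g i = j))ᶜ.card : ℝ) := by
  have hcompl : (Finset.univ.filter (fun i => g i = j))ᶜ =
      Finset.univ.filter (fun i => g i = 1 - j) := by
    ext i
    simp only [Finset.mem_compl, Finset.mem_filter, Finset.mem_univ, true_and]
    generalize g i = k
    revert j k
    decide
  rw [hcompl, TS, Fin.sum_univ_two]
  fin_cases j
  · simp
  · simp [add_comm]

/-- identical basestations, `m = 2` (basestation 2 of the paper is index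
`1`). If the set `M₂ = {i : f i = 1}` has size `d ≥ 1` and contains a user of maximum
weight, then `d · TS(f, v)` is at least the optimal offline utility. -/
theorem stmt17 (n : ℕ) (hn : 1 ≤ n) (v : Fin n → ℝ) (hnn : ∀ i, 0 ≤ v i)
    (f : Fin n → Fin 2) (d : ℕ) (hd : 1 ≤ d)
    (hcard : (Finset.univ.filter (fun i => f i = 1)).card = d)
    (hmax : ∃ i₀, f i₀ = 1 ∧ ∀ i, v i ≤ v i₀) :
    ∀ g : Fin n → Fin 2,
      TS g (fun i _ => v i) ≤ (d : ℝ) * TS f (fun i _ => v i) := by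
  obtain ⟨i₀, hf, hmax⟩ := hmax
  intro g
  rw [TS_two_eq g v (g i₀), TS_two_eq f v 1, ← hcard]
  exact (average_add_average_compl_le v i₀ hnn hmax _ (by simp)).trans
    (isolated_utility_le_card_mul v hnn i₀ _ (by simpa using hf))
end

section
/- Let n ≥ 1, β > 1, and let s : Fin n → {1, …, n} be any bijection (an arbitrary arrival order). Define weights for m = 2 basestations by w i 1 = β^{s(i)} and w i 2 = β^{s(i) − 1/2}. Then the max-weight allocation f_max (which assigns each user to the basestation with the larger weight) assigns every user to basestation 1 and achieves TS(f_max, w) = (Σ_{k=1}^n β^k)/n, while max_g TS(g, w) ≥ β^n; consequently max_g TS(g, w) ≥ n·(1 − 1/β)·TS(f_max, w). In particular, even when only the arrival order is randomized, the competitive ratio of the max-weight association rule grows at least linearly in n. -/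
/-- The utility of the allocation sending every user to basestation `j`. -/
theorem TS_eq_of_forall_eq {n m : ℕ} {f : Fin n → Fin m} {j : Fin m} (hf : ∀ i, f i = j)
    (w : Fin n → Fin m → ℝ) : TS f w = (∑ i, w i j) / (n : ℝ) := by
  unfold TS
  rw [Finset.sum_eq_single j]
  · simp [hf]
  · intro k _ hk
    simp [hf, hk.symm]
  · simp

/-- With nonnegative weights, a user alone at a basestation contributes its full weight. -/
theorem le_TS_of_alone {n m : ℕ} {g : Fin n → Fin m} {w : Fin n → Fin m → ℝ}
    (hw : ∀ i j, 0 ≤ w i j) {a : Fin n} (ha : ∀ i, g i = g a → i = a) :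
    w a (g a) ≤ TS g w := by
  have hfilter : Finset.univ.filter (fun i => g i = g a) = {a} := by
    ext i
    simp only [Finset.mem_filter, Finset.mem_univ, true_and, Finset.mem_singleton]
    exact ⟨ha i, fun h => h ▸ rfl⟩
  calc w a (g a) = (∑ i ∈ Finset.univ.filter (fun i => g i = g a), w i (g a)) /
        ((Finset.univ.filter (fun i => g i = g a)).card : ℝ) := by simp [hfilter]
    _ ≤ TS g w := Finset.single_le_sum
        (f := fun j => (∑ i ∈ Finset.univ.filter (fun i => g i = j), w i j) /
          ((Finset.univ.filter (fun i => g i = j)).card : ℝ))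
        (fun j _ => div_nonneg (Finset.sum_nonneg fun i _ => hw i j) (Nat.cast_nonneg _))
        (Finset.mem_univ (g a))

theorem sum_perm_pow_succ_eq_sum_Icc {n : ℕ} (β : ℝ) (s : Equiv.Perm (Fin n)) :
    ∑ i, β ^ ((s i : ℕ) + 1) = ∑ k ∈ Finset.Icc 1 n, β ^ k := by
  rw [Equiv.sum_comp s (fun i : Fin n => β ^ ((i : ℕ) + 1)),
    Fin.sum_univ_eq_sum_range (fun k => β ^ (k + 1)) n, Finset.range_eq_Ico,
    Finset.sum_Ico_add' (fun k => β ^ k) 0 n 1]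
  rfl

theorem one_sub_inv_mul_sum_Icc_pow {β : ℝ} (hβ : β ≠ 0) (n : ℕ) :
    (1 - 1 / β) * ∑ k ∈ Finset.Icc 1 n, β ^ k = β ^ n - 1 := by
  induction n with
  | zero => simp
  | succ n ih =>
    rw [Finset.sum_Icc_succ_top (by omega), mul_add, ih]
    field_simp
    ring

/-- max-weight association is bad even with only the arrival order
randomized. Let `β > 1` and let `s` be any bijection of the users (arrival order); user
`i` has paper-rank `s(i)+1 ∈ {1,…,n}` and weights `w i 1 = β^{s(i)+1}` and
`w i 2 = β^{(s(i)+1) - 1/2}` to the two basestations (0-indexed as `0` and `1`). Then any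
max-weight allocation `f` sends every user to basestation `1`, achieves
`TS(f,w) = (Σ_{k=1}^n β^k)/n`, while the offline optimum is at least `β^n`, and
consequently at least `n (1 - 1/β) · TS(f,w)`. -/
theorem stmt18 (n : ℕ) (hn : 1 ≤ n) (β : ℝ) (hβ : 1 < β) (s : Equiv.Perm (Fin n))
    (w : Fin n → Fin 2 → ℝ)
    (hw0 : ∀ i, w i 0 = β ^ (((s i : ℕ) : ℝ) + 1))
    (hw1 : ∀ i, w i 1 = β ^ (((s i : ℕ) : ℝ) + 1 - 1 / 2))
    (f : Fin n → Fin 2) (hf : ∀ i j, w i j ≤ w i (f i)) :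
    (∀ i, f i = 0) ∧
    TS f w = (∑ k ∈ Finset.Icc 1 n, β ^ (k : ℝ)) / (n : ℝ) ∧
    (∃ g : Fin n → Fin 2, β ^ (n : ℝ) ≤ TS g w) ∧
    (∃ g : Fin n → Fin 2, (n : ℝ) * (1 - 1 / β) * TS f w ≤ TS g w) := by
  have hβ0 : 0 < β := one_pos.trans hβ
  have hf0 : ∀ i, f i = 0 := by
    intro i
    by_contra h
    have h1 : f i = 1 := by omega
    have hle := hf i 0
    rw [h1, hw0, hw1, Real.rpow_le_rpow_left_iff hβ] at hle
    linarith
  have hpow : ∀ i, w i 0 = β ^ ((s i : ℕ) + 1) := fun i => by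
    rw [hw0, ← Real.rpow_natCast, Nat.cast_succ]
  have hTS : TS f w = (∑ k ∈ Finset.Icc 1 n, β ^ k) / (n : ℝ) := by
    simp_rw [TS_eq_of_forall_eq hf0, hpow, sum_perm_pow_succ_eq_sum_Icc]
  have hw : ∀ i j, 0 ≤ w i j := by
    intro i j
    fin_cases j
    · exact (hw0 i).symm ▸ Real.rpow_nonneg hβ0.le _
    · exact (hw1 i).symm ▸ Real.rpow_nonneg hβ0.le _
  obtain ⟨g, hg⟩ : ∃ g : Fin n → Fin 2, β ^ n ≤ TS g w := by
    let a : Fin n := s.symm ⟨n - 1, by omega⟩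
    let g : Fin n → Fin 2 := fun i => if i = a then 0 else 1
    have hga : g a = 0 := if_pos rfl
    have hwa : w a (g a) = β ^ n := by
      rw [hga, hpow, Equiv.apply_symm_apply, Nat.sub_add_cancel hn]
    refine ⟨g, hwa ▸ le_TS_of_alone hw fun i hi => ?_⟩
    by_contra h
    simp [hga, g, h] at hi
  refine ⟨hf0, by simpa only [Real.rpow_natCast] using hTS,
    ⟨g, by rwa [Real.rpow_natCast]⟩, g, ?_⟩
  have hn0 : (n : ℝ) ≠ 0 := Nat.cast_ne_zero.mpr (by omega)
  calc (n : ℝ) * (1 - 1 / β) * TS f w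
      = (1 - 1 / β) * ∑ k ∈ Finset.Icc 1 n, β ^ k := by
        rw [hTS, mul_assoc, mul_left_comm, mul_div_cancel₀ _ hn0]
    _ = β ^ n - 1 := one_sub_inv_mul_sum_Icc_pow hβ0.ne' n
    _ ≤ TS g w := by linarith
end
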